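/- For every integer g ≥ 2, the determinant of the (6g−3)×(6g−3) integer matrix M_g described in the context equals −2^{4g−3}. -/

import Mathlib

/-! The intersection matrix `M_g` of the two pants decompositions `P` and `Q`,
together with the curve around the puncture, with the edges of the preferred
ideal triangulation of a genus `g` surface with one puncture.

Columns (0-indexed positions, in order): the group `H₁` of 4 columns, the column
`B₁`; then for each `i = 2, …, g-1`: the column `Fᵢ`, the group `Hᵢ` of 4 columns,
the column `Bᵢ`; finally the group `H_g` of 4 columns.  A column is encoded by a
pair `(j, t)` where `j` is the handle index and `t = 0` for `F_j`, `t ∈ {1,2,3,4}`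
for the four columns of `H_j`, and `t = 5` for `B_j`.

Rows (in order): for `i = 1, …, g-1` the rows `Aᵢ, B'ᵢ, Eᵢ, Sᵢ, Kᵢ`, followed
(when `i ≥ 2`) by `C_{i-1}`; then `A_g, B'_g, C_{g-1}` and the last row `D`. -/

/-- A length-4 row vector read at positions `t = 1, 2, 3, 4` (and `0` elsewhere). -/
def vecEnt (w1 w2 w3 w4 : ℤ) : ℕ → ℤ
  | 1 => w1
  | 2 => w2
  | 3 => w3
  | 4 => w4
  | _ => 0

/-- Decode column position `c` into `(handle index, column type)`:
type `0` is `F`, types `1,…,4` are the four `H` columns, type `5` is `B`. -/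
def colDesc (g c : ℕ) : ℕ × ℕ :=
  if c < 4 then (1, c + 1)
  else if c = 4 then (1, 5)
  else if c < 6 * g - 7 then ((c - 5) / 6 + 2, (c - 5) % 6)
  else (g, c - (6 * g - 7) + 1)

/-- Row `Aᵢ`: the vector `a⃗ = (1,1,0,1)` in the column group `Hᵢ`. -/
def entryA (i j t : ℕ) : ℤ := if j = i then vecEnt 1 1 0 1 t else 0

/-- Row `B'ᵢ`: the vector `b⃗ = (1,0,1,1)` in `Hᵢ`. -/
def entryB' (i j t : ℕ) : ℤ := if j = i then vecEnt 1 0 1 1 t else 0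

/-- Row `Eᵢ`: `2` in `Fᵢ`, `e⃗ = (3,2,1,1)` in `Hᵢ`, `2` in `Bᵢ`, `2` in `Fᵢ₊₁`,
and `b⃗` in `Hᵢ₊₁`. -/
def entryE (i j t : ℕ) : ℤ :=
  if j = i then (if t = 0 then 2 else if t = 5 then 2 else vecEnt 3 2 1 1 t)
  else if j = i + 1 then (if t = 0 then 2 else vecEnt 1 0 1 1 t)
  else 0

/-- Row `Sᵢ`: `2` in every column of `H_j`, `B_j`, `F_j` for `j ≤ i`,
`2` in `Fᵢ₊₁`, and `b⃗` in `Hᵢ₊₁`. -/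
def entryS (i j t : ℕ) : ℤ :=
  if j ≤ i then 2
  else if j = i + 1 then (if t = 0 then 2 else vecEnt 1 0 1 1 t)
  else 0

/-- Row `Kᵢ`: `a⃗` in `H_j` for `j = 1, …, i+1`, `2` in `B_j` for `j = 1, …, i`,
and `2` in `F_j` for `j = 2, …, i+1`. -/
def entryK (i j t : ℕ) : ℤ :=
  if j ≤ i then (if t = 0 then 2 else if t = 5 then 2 else vecEnt 1 1 0 1 t)
  else if j = i + 1 then (if t = 0 then 2 else vecEnt 1 1 0 1 t)
  else 0

/-- Row `C_{m-1}` (with terminal handle `m`): `d⃗ = (3,3,2,1)` in `H₁`, `2` in `B₁`,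
then `4` in `F_j`, `f⃗ = (3,3,2,3)` in `H_j` and `2` in `B_j` for `j = 2, …, m-1`,
then `2` in `F_m` and `c⃗ = (1,1,2,3)` in `H_m`. -/
def entryC (m j t : ℕ) : ℤ :=
  if j = 1 then (if t = 5 then 2 else vecEnt 3 3 2 1 t)
  else if j < m then (if t = 0 then 4 else if t = 5 then 2 else vecEnt 3 3 2 3 t)
  else if j = m then (if t = 0 then 2 else vecEnt 1 1 2 3 t)
  else 0

/-- The `rr`-th row (`rr = 0,…,4` for `A, B', E, S, K`) of the block of handle `i`. -/
def blockEntry (i rr j t : ℕ) : ℤ :=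
  match rr with
  | 0 => entryA i j t
  | 1 => entryB' i j t
  | 2 => entryE i j t
  | 3 => entryS i j t
  | _ => entryK i j t

/-- The entry of row `r` of `M_g` in the column encoded by `(j, t)`. -/
def rowEntry (g r j t : ℕ) : ℤ :=
  if r < 5 then blockEntry 1 r j t
  else if r < 6 * g - 7 then
    (if (r - 5) % 6 < 5 then blockEntry ((r - 5) / 6 + 2) ((r - 5) % 6) j t
     else entryC ((r - 5) / 6 + 2) j t)
  else if r = 6 * g - 7 then entryA g j t
  else if r = 6 * g - 6 then entryB' g j t
  else if r = 6 * g - 5 then entryC g j t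
  else 2

/-- The `(6g-3) × (6g-3)` integer matrix `M_g` of intersection numbers of the curves
of the pants decompositions `P ∪ Q ∪ {∂₁}` with the edges of the preferred
triangulation of a genus `g` surface with one puncture. -/
def pantsMatrix (g : ℕ) : Matrix (Fin (6 * g - 3)) (Fin (6 * g - 3)) ℤ :=
  Matrix.of fun r c => rowEntry g r.val (colDesc g c.val).1 (colDesc g c.val).2

/-! ### Proof -/

/-- Sparse row operations do not change the determinant. -/
theorem det_rowop (n : ℕ) (M N : ℕ → ℕ → ℤ) (ρ : ℕ → ℕ)
    (h : ∀ r, r < n → ∃ p, p < n ∧ ∃ c : ℤ, (ρ p < ρ r ∨ c = 0) ∧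
      ∀ j, j < n → N r j = M r j + c * M p j) :
    (Matrix.of fun i j : Fin n => N i j).det = (Matrix.of fun i j : Fin n => M i j).det := by
  choose! p hp c hc hN using h
  let C : Matrix (Fin n) (Fin n) ℤ := Matrix.of fun i k => if k.val = p i then c i else 0
  have hA : (Matrix.of fun i j : Fin n => N i j) = (1 + C) * Matrix.of fun i j : Fin n => M i j := by
    ext i j
    rw [add_mul, one_mul, Matrix.add_apply, Matrix.mul_apply]
    simp only [Matrix.of_apply, C]
    rw [hN i i.2 j j.2, Finset.sum_eq_single (⟨p i, hp i i.2⟩ : Fin n)]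
    · simp
    · intro b _ hb
      have : b.val ≠ p i := fun h => hb (Fin.ext h)
      simp [this]
    · simp
  have hdet : (1 + C).det = 1 := by
    have hb : (1 + C).transpose.BlockTriangular (fun i : Fin n => ρ i) := by
      intro i j hij
      have hne : j ≠ i := by rintro rfl; exact lt_irrefl _ hij
      simp only [Matrix.transpose_apply, Matrix.add_apply, Matrix.one_apply_ne hne, C,
        Matrix.of_apply, zero_add]
      split_ifs with h
      · rcases hc j j.2 with h' | h'
        · rw [← h] at h'
          exact absurd hij (by simp; omega)
        · exact h'
      · rfl
    rw [← Matrix.det_transpose, hb.det]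
    apply Finset.prod_eq_one
    intro a _
    have : (1 + C).transpose.toSquareBlock (fun i : Fin n => ρ i) a = 1 := by
      ext ⟨i, hi⟩ ⟨j, hj⟩
      have hz : C j i = 0 := by
        simp only [C, Matrix.of_apply]
        split_ifs with h
        · rcases hc j j.2 with h' | h'
          · rw [← h] at h'
            omega
          · exact h'
        · rfl
      simp [Matrix.toSquareBlock_def, hz, Matrix.one_apply]
    rw [this, Matrix.det_one]
  rw [hA, Matrix.det_mul, hdet, one_mul]

/-- Middle rows after the first stage. -/
def midRow1 (i s j t : ℕ) : ℤ :=
  match s with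
  | 0 => entryA i j t
  | 1 => entryB' i j t
  | 2 => entryE i j t
  | 3 => entryS i j t - entryS (i - 1) j t
  | 4 => entryK i j t - entryK (i - 1) j t
  | _ => if i = 2 then entryC 2 j t else entryC i j t - entryC (i - 1) j t

/-- Last rows after the first stage. -/
def lastRow1 (i s j t : ℕ) : ℤ :=
  match s with
  | 0 => entryA i j t
  | 1 => entryB' i j t
  | 2 => if i = 2 then entryC 2 j t else entryC i j t - entryC (i - 1) j t
  | _ => 2 - entryS (i - 1) j t

/-- The correction added in the second stage. -/
def corr (i s j t : ℕ) : ℤ :=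
  match s with
  | 2 => entryB' (i + 1) j t
  | 3 => entryB' (i + 1) j t
  | 4 => entryA (i + 1) j t
  | _ => 0

/-- The matrix after the first stage. -/
def stage1 (m r j t : ℕ) : ℤ :=
  if r < 5 then blockEntry 1 r j t
  else if r < 6 * m + 5 then midRow1 ((r - 5) / 6 + 2) ((r - 5) % 6) j t
  else lastRow1 (m + 2) (r - (6 * m + 5)) j t

/-- The matrix after the second stage. -/
def stage2 (m r j t : ℕ) : ℤ :=
  if r < 5 then blockEntry 1 r j t - corr 1 r j t
  else if r < 6 * m + 5 then
    midRow1 ((r - 5) / 6 + 2) ((r - 5) % 6) j t - corr ((r - 5) / 6 + 2) ((r - 5) % 6) j t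
  else lastRow1 (m + 2) (r - (6 * m + 5)) j t

/-- The matrix after the third stage. -/
def stage3 (m r c : ℕ) : ℤ :=
  stage2 m r (colDesc (m + 2) c).1 (colDesc (m + 2) c).2 -
    if 5 ≤ c ∧ c < 6 * m + 5 ∧ (c - 5) % 6 = 0 then
      stage2 m r (colDesc (m + 2) (c - 1)).1 (colDesc (m + 2) (c - 1)).2 else 0

theorem row_first (m r j t : ℕ) (h : r < 5) : rowEntry (m + 2) r j t = blockEntry 1 r j t := by
  simp [rowEntry, h]

theorem row_mid (m k s j t : ℕ) (hk : k < m) (h : s < 5) :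
    rowEntry (m + 2) (6 * k + 5 + s) j t = blockEntry (k + 2) s j t := by
  have h1 : (6 * k + 5 + s - 5) % 6 = s := by omega
  have h2 : (6 * k + 5 + s - 5) / 6 = k := by omega
  rw [rowEntry, if_neg (by omega), if_pos (by omega), h1, h2, if_pos h]

theorem row_midC (m k j t : ℕ) (hk : k < m) :
    rowEntry (m + 2) (6 * k + 10) j t = entryC (k + 2) j t := by
  have h1 : (6 * k + 10 - 5) % 6 = 5 := by omega
  have h2 : (6 * k + 10 - 5) / 6 = k := by omega
  rw [rowEntry, if_neg (by omega), if_pos (by omega), h1, h2, if_neg (by omega)]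

theorem row_lastA (m j t : ℕ) : rowEntry (m + 2) (6 * m + 5) j t = entryA (m + 2) j t := by
  rw [rowEntry, if_neg (by omega), if_neg (by omega), if_pos (by omega)]
theorem row_lastB (m j t : ℕ) : rowEntry (m + 2) (6 * m + 6) j t = entryB' (m + 2) j t := by
  rw [rowEntry, if_neg (by omega), if_neg (by omega), if_neg (by omega), if_pos (by omega)]
theorem row_lastC (m j t : ℕ) : rowEntry (m + 2) (6 * m + 7) j t = entryC (m + 2) j t := by
  rw [rowEntry, if_neg (by omega), if_neg (by omega), if_neg (by omega), if_neg (by omega),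
    if_pos (by omega)]
theorem row_lastD (m j t : ℕ) : rowEntry (m + 2) (6 * m + 8) j t = 2 := by
  rw [rowEntry, if_neg (by omega), if_neg (by omega), if_neg (by omega), if_neg (by omega),
    if_neg (by omega)]

theorem st1_first (m r j t : ℕ) (h : r < 5) : stage1 m r j t = blockEntry 1 r j t := by
  simp [stage1, h]
theorem st1_mid (m k s j t : ℕ) (hk : k < m) (h : s < 6) :
    stage1 m (6 * k + 5 + s) j t = midRow1 (k + 2) s j t := by
  have h1 : (6 * k + 5 + s - 5) % 6 = s := by omega
  have h2 : (6 * k + 5 + s - 5) / 6 = k := by omega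
  rw [stage1, if_neg (by omega), if_pos (by omega), h1, h2]
theorem st1_last (m s j t : ℕ) : stage1 m (6 * m + 5 + s) j t = lastRow1 (m + 2) s j t := by
  have h1 : 6 * m + 5 + s - (6 * m + 5) = s := by omega
  rw [stage1, if_neg (by omega), if_neg (by omega), h1]
theorem st2_first (m r j t : ℕ) (h : r < 5) :
    stage2 m r j t = blockEntry 1 r j t - corr 1 r j t := by
  simp [stage2, h]
theorem st2_mid (m k s j t : ℕ) (hk : k < m) (h : s < 6) :
    stage2 m (6 * k + 5 + s) j t = midRow1 (k + 2) s j t - corr (k + 2) s j t := by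
  have h1 : (6 * k + 5 + s - 5) % 6 = s := by omega
  have h2 : (6 * k + 5 + s - 5) / 6 = k := by omega
  rw [stage2, if_neg (by omega), if_pos (by omega), h1, h2]
theorem st2_last (m s j t : ℕ) : stage2 m (6 * m + 5 + s) j t = lastRow1 (m + 2) s j t := by
  have h1 : 6 * m + 5 + s - (6 * m + 5) = s := by omega
  rw [stage2, if_neg (by omega), if_neg (by omega), h1]

theorem col_first (m c : ℕ) (h : c < 5) : colDesc (m + 2) c = (1, c + 1) := by
  unfold colDesc
  split_ifs <;> first | rfl | (simp; omega)
theorem col_mid (m k s : ℕ) (hk : k < m) (h : s < 6) :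
    colDesc (m + 2) (6 * k + 5 + s) = (k + 2, s) := by
  have h1 : (6 * k + 5 + s - 5) % 6 = s := by omega
  have h2 : (6 * k + 5 + s - 5) / 6 = k := by omega
  rw [colDesc, if_neg (by omega), if_neg (by omega), if_pos (by omega), h1, h2]
theorem col_last (m s : ℕ) : colDesc (m + 2) (6 * m + 5 + s) = (m + 2, s + 1) := by
  rw [colDesc, if_neg (by omega), if_neg (by omega), if_neg (by omega)]
  congr 1; omega

theorem idx_cases (m r : ℕ) (h : r < 6 * m + 9) :
    r < 5 ∨ (∃ k s, k < m ∧ s < 6 ∧ r = 6 * k + 5 + s) ∨ ∃ s, s < 4 ∧ r = 6 * m + 5 + s := by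
  by_cases h1 : r < 5
  · exact Or.inl h1
  by_cases h2 : r < 6 * m + 5
  · exact Or.inr (Or.inl ⟨(r - 5) / 6, (r - 5) % 6, by omega, by omega, by omega⟩)
  · exact Or.inr (Or.inr ⟨r - (6 * m + 5), by omega, by omega⟩)

theorem stage1_op (m r : ℕ) (h : r < 6 * m + 9) : ∃ p, p < 6 * m + 9 ∧ ∃ c : ℤ, (p < r ∨ c = 0) ∧
    ∀ j t, stage1 m r j t = rowEntry (m + 2) r j t + c * rowEntry (m + 2) p j t := by
  rcases idx_cases m r h with h1 | ⟨k, s, hk, hs, rfl⟩ | ⟨s, hs, rfl⟩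
  · exact ⟨r, h, 0, Or.inr rfl, fun j t => by rw [st1_first _ _ _ _ h1, row_first _ _ _ _ h1]; ring⟩
  · rcases k with _ | k
    · interval_cases s
      · exact ⟨0, by omega, 0, Or.inr rfl, fun j t => by
          rw [st1_mid _ _ _ _ _ hk hs, row_mid _ _ _ _ _ hk (by omega)]; simp [midRow1, blockEntry]⟩
      · exact ⟨0, by omega, 0, Or.inr rfl, fun j t => by
          rw [st1_mid _ _ _ _ _ hk hs, row_mid _ _ _ _ _ hk (by omega)]; simp [midRow1, blockEntry]⟩
      · exact ⟨0, by omega, 0, Or.inr rfl, fun j t => by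
          rw [st1_mid _ _ _ _ _ hk hs, row_mid _ _ _ _ _ hk (by omega)]; simp [midRow1, blockEntry]⟩
      · exact ⟨3, by omega, -1, Or.inl (by omega), fun j t => by
          rw [st1_mid _ _ _ _ _ hk hs, row_mid _ _ _ _ _ hk (by omega), row_first _ _ _ _ (by omega)]
          simp [midRow1, blockEntry]; ring⟩
      · exact ⟨4, by omega, -1, Or.inl (by omega), fun j t => by
          rw [st1_mid _ _ _ _ _ hk hs, row_mid _ _ _ _ _ hk (by omega), row_first _ _ _ _ (by omega)]
          simp [midRow1, blockEntry]; ring⟩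
      · exact ⟨0, by omega, 0, Or.inr rfl, fun j t => by
          rw [st1_mid _ _ _ _ _ hk hs, row_midC _ _ _ _ hk]; simp [midRow1]⟩
    · have hk' : k < m := by omega
      interval_cases s
      · exact ⟨0, by omega, 0, Or.inr rfl, fun j t => by
          rw [st1_mid _ _ _ _ _ hk hs, row_mid _ _ _ _ _ hk (by omega)]; simp [midRow1, blockEntry]⟩
      · exact ⟨0, by omega, 0, Or.inr rfl, fun j t => by
          rw [st1_mid _ _ _ _ _ hk hs, row_mid _ _ _ _ _ hk (by omega)]; simp [midRow1, blockEntry]⟩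
      · exact ⟨0, by omega, 0, Or.inr rfl, fun j t => by
          rw [st1_mid _ _ _ _ _ hk hs, row_mid _ _ _ _ _ hk (by omega)]; simp [midRow1, blockEntry]⟩
      · exact ⟨6 * k + 5 + 3, by omega, -1, Or.inl (by omega), fun j t => by
          rw [st1_mid _ _ _ _ _ hk hs, row_mid _ _ _ _ _ hk (by omega),
            row_mid _ _ _ _ _ hk' (by omega)]
          simp [midRow1, blockEntry]; ring_nf⟩
      · exact ⟨6 * k + 5 + 4, by omega, -1, Or.inl (by omega), fun j t => by
          rw [st1_mid _ _ _ _ _ hk hs, row_mid _ _ _ _ _ hk (by omega),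
            row_mid _ _ _ _ _ hk' (by omega)]
          simp [midRow1, blockEntry]; ring_nf⟩
      · exact ⟨6 * k + 10, by omega, -1, Or.inl (by omega), fun j t => by
          rw [st1_mid _ _ _ _ _ hk hs, row_midC _ _ _ _ hk, row_midC _ _ _ _ hk']
          simp [midRow1]; ring_nf⟩
  · interval_cases s
    · exact ⟨0, by omega, 0, Or.inr rfl, fun j t => by
        rw [st1_last, add_zero, row_lastA]; simp [lastRow1]⟩
    · exact ⟨0, by omega, 0, Or.inr rfl, fun j t => by
        rw [st1_last, add_assoc, row_lastB]; simp [lastRow1]⟩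
    · rcases m with _ | k
      · exact ⟨0, by omega, 0, Or.inr rfl, fun j t => by
          rw [st1_last, add_assoc, row_lastC]; simp [lastRow1]⟩
      · exact ⟨6 * k + 10, by omega, -1, Or.inl (by omega), fun j t => by
          rw [st1_last, add_assoc (6 * (k + 1)), row_lastC, row_midC _ _ _ _ (by omega)]
          simp [lastRow1]; ring_nf⟩
    · rcases m with _ | k
      · exact ⟨3, by omega, -1, Or.inl (by omega), fun j t => by
          rw [st1_last, add_assoc, row_lastD, row_first _ _ _ _ (by omega)]
          simp [lastRow1, blockEntry]; ring⟩
      · exact ⟨6 * k + 5 + 3, by omega, -1, Or.inl (by omega), fun j t => by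
          rw [st1_last, add_assoc (6 * (k + 1)), row_lastD, row_mid _ _ _ _ _ (by omega) (by omega)]
          simp [lastRow1, blockEntry]; ring_nf⟩

theorem st1_A (m k j t : ℕ) (hk : k ≤ m) : stage1 m (6 * k + 5) j t = entryA (k + 2) j t := by
  rcases hk.lt_or_eq with h | rfl
  · exact st1_mid m k 0 j t h (by omega)
  · exact st1_last k 0 j t
theorem st1_B (m k j t : ℕ) (hk : k ≤ m) : stage1 m (6 * k + 6) j t = entryB' (k + 2) j t := by
  rcases hk.lt_or_eq with h | rfl
  · exact st1_mid m k 1 j t h (by omega)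
  · exact st1_last k 1 j t

theorem stage2_op (m r : ℕ) (h : r < 6 * m + 9) : ∃ p, p < 6 * m + 9 ∧ ∃ c : ℤ,
    (6 * m + 9 - p < 6 * m + 9 - r ∨ c = 0) ∧
    ∀ j t, stage2 m r j t = stage1 m r j t + c * stage1 m p j t := by
  rcases idx_cases m r h with h1 | ⟨k, s, hk, hs, rfl⟩ | ⟨s, hs, rfl⟩
  · have e : ∀ j t, stage2 m r j t = stage1 m r j t - corr 1 r j t := fun j t => by
      rw [st1_first _ _ _ _ h1, st2_first _ _ _ _ h1]
    have hA := fun j t => st1_A m 0 j t (by omega)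
    have hB := fun j t => st1_B m 0 j t (by omega)
    interval_cases r
    · exact ⟨0, by omega, 0, Or.inr rfl, fun j t => by rw [e]; simp [corr]⟩
    · exact ⟨0, by omega, 0, Or.inr rfl, fun j t => by rw [e]; simp [corr]⟩
    · exact ⟨6 * 0 + 6, by omega, -1, Or.inl (by omega), fun j t => by
        rw [e, hB]; simp [corr]; ring⟩
    · exact ⟨6 * 0 + 6, by omega, -1, Or.inl (by omega), fun j t => by
        rw [e, hB]; simp [corr]; ring⟩
    · exact ⟨6 * 0 + 5, by omega, -1, Or.inl (by omega), fun j t => by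
        rw [e, hA]; simp [corr]; ring⟩
  · have e : ∀ j t, stage2 m (6 * k + 5 + s) j t =
        stage1 m (6 * k + 5 + s) j t - corr (k + 2) s j t := fun j t => by
      rw [st1_mid _ _ _ _ _ hk hs, st2_mid _ _ _ _ _ hk hs]
    have hA := fun j t => st1_A m (k + 1) j t (by omega)
    have hB := fun j t => st1_B m (k + 1) j t (by omega)
    interval_cases s
    · exact ⟨0, by omega, 0, Or.inr rfl, fun j t => by rw [e]; simp [corr]⟩
    · exact ⟨0, by omega, 0, Or.inr rfl, fun j t => by rw [e]; simp [corr]⟩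
    · exact ⟨6 * (k + 1) + 6, by omega, -1, Or.inl (by omega), fun j t => by
        rw [e, hB]; simp only [corr]; ring_nf⟩
    · exact ⟨6 * (k + 1) + 6, by omega, -1, Or.inl (by omega), fun j t => by
        rw [e, hB]; simp only [corr]; ring_nf⟩
    · exact ⟨6 * (k + 1) + 5, by omega, -1, Or.inl (by omega), fun j t => by
        rw [e, hA]; simp only [corr]; ring_nf⟩
    · exact ⟨0, by omega, 0, Or.inr rfl, fun j t => by rw [e]; simp [corr]⟩
  · exact ⟨0, by omega, 0, Or.inr rfl, fun j t => by rw [st1_last, st2_last]; ring⟩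

theorem det_stage3 (m : ℕ) : (pantsMatrix (m + 2)).det =
    (Matrix.of fun i j : Fin (6 * m + 9) => stage3 m i j).det := by
  have e1 := det_rowop (6 * m + 9)
    (fun r c => rowEntry (m + 2) r (colDesc (m + 2) c).1 (colDesc (m + 2) c).2)
    (fun r c => stage1 m r (colDesc (m + 2) c).1 (colDesc (m + 2) c).2) id (by
      intro r hr
      obtain ⟨p, hp, c, hc, hh⟩ := stage1_op m r hr
      exact ⟨p, hp, c, hc, fun j _ => hh _ _⟩)
  have e2 := det_rowop (6 * m + 9)
    (fun r c => stage1 m r (colDesc (m + 2) c).1 (colDesc (m + 2) c).2)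
    (fun r c => stage2 m r (colDesc (m + 2) c).1 (colDesc (m + 2) c).2)
    (fun r => 6 * m + 9 - r) (by
      intro r hr
      obtain ⟨p, hp, c, hc, hh⟩ := stage2_op m r hr
      exact ⟨p, hp, c, hc, fun j _ => hh _ _⟩)
  have e3 := det_rowop (6 * m + 9)
    (fun c r => stage2 m r (colDesc (m + 2) c).1 (colDesc (m + 2) c).2)
    (fun c r => stage3 m r c) id (by
      intro c hc
      by_cases h : 5 ≤ c ∧ c < 6 * m + 5 ∧ (c - 5) % 6 = 0
      · exact ⟨c - 1, by omega, -1, Or.inl (by simp only [id]; omega), fun r _ => by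
          simp only [stage3, if_pos h]; ring⟩
      · exact ⟨0, by omega, 0, Or.inr rfl, fun r _ => by
          simp only [stage3, if_neg h]; ring⟩)
  rw [← Matrix.det_transpose (Matrix.of fun i j : Fin (6 * m + 9) => stage3 m i j)]
  refine Eq.trans ?_ e3.symm
  rw [← Matrix.det_transpose (Matrix.of fun i j : Fin (6 * m + 9) =>
    stage2 m j (colDesc (m + 2) i).1 (colDesc (m + 2) i).2)]
  exact (e2.trans e1).symm

/-- Entries of row block `i` in later column groups vanish. -/
theorem mid_zero (i s j t : ℕ) (hi : 2 ≤ i) (hij : i < j) (ht : t ≠ 0) :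
    midRow1 i s j t - corr i s j t = 0 := by
  unfold midRow1 corr
  split <;> simp only [entryA, entryB', entryE, entryS, entryK, entryC] <;> split_ifs <;> omega

theorem mid_F (i s l : ℕ) (hi : 2 ≤ i) (hij : i < l + 1) :
    midRow1 i s (l + 1) 0 - corr i s (l + 1) 0 = midRow1 i s l 5 - corr i s l 5 := by
  unfold midRow1 corr
  obtain ⟨a, rfl⟩ : ∃ a, i = a + 2 := ⟨i - 2, by omega⟩
  split <;> simp [entryA, entryB', entryE, entryS, entryK, entryC, vecEnt] <;>
    (try split_ifs) <;> (try omega)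

theorem first_zero (s j t : ℕ) (hij : 1 < j) (ht : t ≠ 0) :
    blockEntry 1 s j t - corr 1 s j t = 0 ∨ 5 ≤ s := by
  by_cases hs : s < 5
  · left
    interval_cases s <;>
      simp only [blockEntry, corr, entryA, entryB', entryE, entryS, entryK] <;>
      split_ifs <;> omega
  · right; omega

theorem first_F (s l : ℕ) (hs : s < 5) (hl : 1 ≤ l) :
    blockEntry 1 s (l + 1) 0 - corr 1 s (l + 1) 0 = blockEntry 1 s l 5 - corr 1 s l 5 := by
  rcases hl.lt_or_eq with h | rfl
  · have h1 : ¬ l = 1 := by omega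
    have h2 : ¬ l ≤ 1 := by omega
    have h3 : ¬ l = 0 := by omega
    interval_cases s <;>
      simp_all [blockEntry, corr, entryA, entryB', entryE, entryS, entryK, vecEnt]
  · interval_cases s <;>
      simp [blockEntry, corr, entryA, entryB', entryE, entryS, entryK, vecEnt]

theorem st3_first (m r c : ℕ) (hc : c < 5) : stage3 m r c = stage2 m r 1 (c + 1) := by
  rw [stage3, if_neg (by omega), col_first _ _ hc, sub_zero]
theorem st3_mid (m r k t : ℕ) (hk : k < m) (ht : t ≠ 0) (h : t < 6) :
    stage3 m r (6 * k + 5 + t) = stage2 m r (k + 2) t := by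
  rw [stage3, if_neg (by omega), col_mid _ _ _ hk h, sub_zero]
theorem st3_F (m r k : ℕ) (hk : k < m) :
    stage3 m r (6 * k + 5) = stage2 m r (k + 2) 0 - stage2 m r (k + 1) 5 := by
  have h0 := col_mid m k 0 hk (by omega)
  rw [add_zero] at h0
  rw [stage3, if_pos (by omega), h0]
  rcases k with _ | k
  · rw [col_first _ _ (by omega)]
  · have : 6 * (k + 1) + 5 - 1 = 6 * k + 5 + 5 := by omega
    rw [this, col_mid _ _ _ (by omega) (by omega)]
theorem st3_last (m r s : ℕ) : stage3 m r (6 * m + 5 + s) = stage2 m r (m + 2) (s + 1) := by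
  rw [stage3, if_neg (by omega), col_last, sub_zero]

theorem stage3_zero (m r c : ℕ) (hr : r < 6 * m + 9) (hc : c < 6 * m + 9)
    (h : (r + 1) / 6 < (c + 1) / 6) : stage3 m r c = 0 := by
  rcases idx_cases m c hc with c1 | ⟨l, u, hl, hu, rfl⟩ | ⟨u, hu, rfl⟩
  · omega
  · by_cases hu0 : u = 0
    · subst hu0
      rw [add_zero, st3_F _ _ _ hl]
      rcases idx_cases m r hr with h1 | ⟨k, s, hk, hs, rfl⟩ | ⟨s, hs, rfl⟩
      · rw [st2_first _ _ _ _ h1, st2_first _ _ _ _ h1, first_F r (l + 1) h1 (by omega), sub_self]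
      · rw [st2_mid _ _ _ _ _ hk hs, st2_mid _ _ _ _ _ hk hs,
          mid_F (k + 2) s (l + 1) (by omega) (by omega), sub_self]
      · omega
    · rw [st3_mid _ _ _ _ hl hu0 hu]
      rcases idx_cases m r hr with h1 | ⟨k, s, hk, hs, rfl⟩ | ⟨s, hs, rfl⟩
      · rw [st2_first _ _ _ _ h1]
        exact (first_zero r (l + 2) u (by omega) hu0).resolve_right (by omega)
      · rw [st2_mid _ _ _ _ _ hk hs]
        exact mid_zero _ _ _ _ (by omega) (by omega) hu0
      · omega
  · rw [st3_last]
    rcases idx_cases m r hr with h1 | ⟨k, s, hk, hs, rfl⟩ | ⟨s, hs, rfl⟩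
    · rw [st2_first _ _ _ _ h1]
      exact (first_zero r (m + 2) (u + 1) (by omega) (by omega)).resolve_right (by omega)
    · rw [st2_mid _ _ _ _ _ hk hs]
      exact mid_zero _ _ _ _ (by omega) (by omega) (by omega)
    · omega

/-- Block number of a position. -/
def blk (m : ℕ) (r : Fin (6 * m + 9)) : Fin (m + 2) := ⟨(r.val + 1) / 6, by omega⟩

theorem blk_det (m a L : ℕ) (k : Fin (m + 2)) (ha : a + L ≤ 6 * m + 9)
    (h : ∀ r, r < 6 * m + 9 → ((r + 1) / 6 = k.val ↔ a ≤ r ∧ r < a + L)) :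
    ((Matrix.of fun i j : Fin (6 * m + 9) => stage3 m i j).transpose.toSquareBlock (blk m) k).det =
      (Matrix.of fun i j : Fin L => stage3 m (a + i) (a + j)).det := by
  let e : Fin L ≃ {r : Fin (6 * m + 9) // blk m r = k} :=
    { toFun := fun i => ⟨⟨a + i, by omega⟩, Fin.ext ((h (a + i) (by omega)).2 (by omega))⟩
      invFun := fun r => ⟨r.1.val - a, by
        have := (h r.1.val r.1.2).1 (congrArg Fin.val r.2)
        omega⟩
      left_inv := fun i => by ext; simp
      right_inv := fun r => by
        have := (h r.1.val r.1.2).1 (congrArg Fin.val r.2)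
        ext; simp; omega }
  rw [← Matrix.det_transpose (Matrix.of fun i j : Fin L => stage3 m (a + i) (a + j)),
    ← Matrix.det_submatrix_equiv_self e]
  rfl

theorem det_first (m : ℕ) :
    (Matrix.of fun i j : Fin 5 => stage3 m (0 + i) (0 + j)).det = -8 := by
  have : (Matrix.of fun i j : Fin 5 => stage3 m (0 + i) (0 + j)) =
      !![1, 1, 0, 1, 0; 1, 0, 1, 1, 0; 3, 2, 1, 1, 2; 2, 2, 2, 2, 2; 1, 1, 0, 1, 2] := by
    ext i j
    rw [Matrix.of_apply, zero_add, zero_add, st3_first _ _ _ j.2, st2_first _ _ _ _ i.2]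
    fin_cases i <;> fin_cases j <;>
      simp [blockEntry, corr, entryA, entryB', entryE, entryS, entryK, vecEnt]
  rw [this]
  simp [Matrix.det_succ_row_zero, Fin.sum_univ_succ, Fin.succAbove]

theorem det_mid (m k : ℕ) (hk : k < m) :
    (Matrix.of fun i j : Fin 6 => stage3 m (6 * k + 5 + i) (6 * k + 5 + j)).det = 16 := by
  have : (Matrix.of fun i j : Fin 6 => stage3 m (6 * k + 5 + i) (6 * k + 5 + j)) =
      !![0, 1, 1, 0, 1, 0; 0, 1, 0, 1, 1, 0; 2, 3, 2, 1, 1, 2; 0, 1, 2, 1, 1, 2;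
        0, 0, 0, 0, 0, 2; 0, 1, 1, 2, 3, 0] := by
    ext i j
    rw [Matrix.of_apply]
    by_cases hj : j = 0
    · subst hj
      rw [Fin.val_zero, add_zero, st3_F _ _ _ hk, st2_mid _ _ _ _ _ hk i.2,
        st2_mid _ _ _ _ _ hk i.2]
      rcases k with _ | k <;> fin_cases i <;>
        simp [midRow1, corr, entryA, entryB', entryE, entryS, entryK, entryC, vecEnt]
    · rw [st3_mid _ _ _ _ hk (fun h => hj (Fin.ext h)) j.2, st2_mid _ _ _ _ _ hk i.2]
      have h1 : ¬ k + 2 = 1 := by omega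
      fin_cases i <;> fin_cases j <;> first | exact absurd rfl hj |
        simp [midRow1, corr, entryA, entryB', entryE, entryS, entryK, entryC, vecEnt]
  rw [this]
  simp [Matrix.det_succ_row_zero, Fin.sum_univ_succ, Fin.succAbove]

theorem det_last (m : ℕ) :
    (Matrix.of fun i j : Fin 4 => stage3 m (6 * m + 5 + i) (6 * m + 5 + j)).det = 4 := by
  have : (Matrix.of fun i j : Fin 4 => stage3 m (6 * m + 5 + i) (6 * m + 5 + j)) =
      !![1, 1, 0, 1; 1, 0, 1, 1; 1, 1, 2, 3; 1, 2, 1, 1] := by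
    ext i j
    rw [Matrix.of_apply, st3_last, st2_last]
    rcases m with _ | m <;> fin_cases i <;> fin_cases j <;>
      simp [lastRow1, entryA, entryB', entryS, entryC, vecEnt]
  rw [this]
  simp [Matrix.det_succ_row_zero, Fin.sum_univ_succ, Fin.succAbove]

theorem det_pants_aux (m : ℕ) : (pantsMatrix (m + 2)).det = -2 ^ (4 * m + 5) := by
  rw [det_stage3, ← Matrix.det_transpose]
  have hb : (Matrix.of fun i j : Fin (6 * m + 9) => stage3 m i j).transpose.BlockTriangular
      (blk m) := by
    intro i j hij
    exact stage3_zero m j i j.2 i.2 hij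
  rw [hb.det_fintype, Fin.prod_univ_succ, Fin.prod_univ_castSucc]
  rw [blk_det m 0 5 0 (by omega) (by intro r hr; simp only [Fin.val_zero]; omega), det_first]
  rw [blk_det m (6 * m + 5) 4 _ (by omega)
    (by intro r hr; simp only [Fin.val_succ, Fin.val_last]; omega), det_last]
  rw [Finset.prod_congr rfl (g := fun _ => (16 : ℤ)) (fun k _ => by
    rw [blk_det m (6 * k + 5) 6 _ (by omega)
      (by intro r hr; simp only [Fin.val_succ, Fin.val_castSucc]; omega), det_mid m k k.2])]
  simp only [Finset.prod_const, Finset.card_univ, Fintype.card_fin]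
  rw [pow_add, pow_mul]
  norm_num
  ring

/-- **Determinant of the change-of-basis matrix, one puncture.**
For every integer `g ≥ 2`, the determinant of `M_g` equals `-2 ^ (4g - 3)`. -/
theorem det_pantsMatrix (g : ℕ) (hg : 2 ≤ g) :
    (pantsMatrix g).det = -2 ^ (4 * g - 3) := by
  obtain ⟨m, rfl⟩ : ∃ m, g = m + 2 := ⟨g - 2, by omega⟩
  have e : 4 * (m + 2) - 3 = 4 * m + 5 := by omega
  rw [e]
  exact det_pants_aux m
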